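/- Let χ be a Dirichlet character, d ≥ 1, and s an integer ≥ 1, with χ non-principal if s = 1. Then L^•_d({s}^d;{χ}^d) = Σ_{μ ⊢ d} ε_μ u_μ ∏_{j=1}^{ℓ(μ)} L^★_{μ_j}({s}^{μ_j};{χ}^{μ_j}) and, symmetrically, L^★_d({s}^d;{χ}^d) = Σ_{μ ⊢ d} ε_μ u_μ ∏_{j=1}^{ℓ(μ)} L^•_{μ_j}({s}^{μ_j};{χ}^{μ_j}), where u_μ := ℓ(μ)! / ∏_i m_i(μ)!. The same two identities hold with L^•, L^★ replaced throughout by the q-analogues L^•_q, L^★_q for any 0 < q < 1 and complex s with Re(s) > 1. -/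

import Mathlib

open Complex Filter Finset Topology

noncomputable section

/-- `u_μ = ℓ(μ)!/∏_i m_i(μ)!`, the multinomial coefficient of the multiplicities. -/
def uPart {d : ℕ} (μ : Nat.Partition d) : ℕ :=
  Nat.multinomial μ.parts.toFinset fun i => μ.parts.count i

/-- Truncated strict multiple `L`-sum `∑_{0<m_1<⋯<m_d≤M} ∏_j χ(m_j)/m_j^s`. -/
def multLSumLt {N : ℕ} (χ : DirichletCharacter ℂ N) (d s M : ℕ) : ℂ :=
  ∑ m ∈ (Fintype.piFinset fun _ : Fin d => Finset.Icc 1 M).filter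
      (fun m => ∀ i j : Fin d, i < j → m i < m j),
    ∏ j, χ (m j) / (m j : ℂ) ^ s

/-- Truncated non-strict multiple `L`-sum `∑_{0<m_1≤⋯≤m_d≤M} ∏_j χ(m_j)/m_j^s`. -/
def multLSumLe {N : ℕ} (χ : DirichletCharacter ℂ N) (d s M : ℕ) : ℂ :=
  ∑ m ∈ (Fintype.piFinset fun _ : Fin d => Finset.Icc 1 M).filter
      (fun m => ∀ i j : Fin d, i < j → m i ≤ m j),
    ∏ j, χ (m j) / (m j : ℂ) ^ s

/-- Truncated strict multiple `q`-`L`-sum. -/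
def qMultLSumLt {N : ℕ} (χ : DirichletCharacter ℂ N) (d : ℕ) (q : ℝ) (s : ℂ) (M : ℕ) : ℂ :=
  ∑ m ∈ (Fintype.piFinset fun _ : Fin d => Finset.Icc 1 M).filter
      (fun m => ∀ i j : Fin d, i < j → m i < m j),
    ∏ j, χ (m j) * (q : ℂ) ^ ((m j : ℂ) * (s - 1)) /
      (((1 - q ^ (m j)) / (1 - q) : ℝ) : ℂ) ^ s

/-- Truncated non-strict multiple `q`-`L`-sum. -/
def qMultLSumLe {N : ℕ} (χ : DirichletCharacter ℂ N) (d : ℕ) (q : ℝ) (s : ℂ) (M : ℕ) : ℂ :=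
  ∑ m ∈ (Fintype.piFinset fun _ : Fin d => Finset.Icc 1 M).filter
      (fun m => ∀ i j : Fin d, i < j → m i ≤ m j),
    ∏ j, χ (m j) * (q : ℂ) ^ ((m j : ℂ) * (s - 1)) /
      (((1 - q ^ (m j)) / (1 - q) : ℝ) : ℂ) ^ s

/-- The right-hand side `Σ_{μ ⊢ d} ε_μ u_μ ∏_{j=1}^{ℓ(μ)} V(μ_j)` of formula (2.13),
where `V c` is the depth-`c` multiple `L`-value (of the opposite kind). -/
def mixRHS (d : ℕ) (V : ℕ → ℂ) : ℂ :=
  ∑ μ : Nat.Partition d,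
    (-1 : ℂ) ^ ((d : ℤ) - μ.parts.card) * (uPart μ : ℂ) * (μ.parts.map V).prod

/-!
For a finite family of numbers `f a`, the generating functions of the strict and of the weak
multiple sums are `E(T) = ∏ (1 + f a T)` and `H(T) = ∏ (1 - f a T)⁻¹`, so `H(T) E(-T) = 1`.
Expanding `H(T) = ∑ n, (1 - E(-T)) ^ n` writes each coefficient of `H` as a sum over compositions
of its degree, and collecting the compositions with the same underlying partition `μ` produces
the multinomial coefficient `u_μ`; replacing `T` by `-T` exchanges the two roles. For the infinite
sums, Newton's identities express the strict sums through the power sums `∑ f a ^ k`, which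
converge, and the identity just proved then gives convergence of the weak sums.
-/

section Partition

variable {R : Type*} [CommRing R]

lemma monomial_multiset_prod (c : ℕ → R) (t : Multiset ℕ) :
    (t.map fun k => Polynomial.monomial k (c k)).prod =
      Polynomial.monomial t.sum (t.map c).prod := by
  induction t using Multiset.induction_on with
  | empty => simp
  | cons k t ih => simp [ih, Polynomial.monomial_mul_monomial]

lemma coeff_sum_monomial_pow (c : ℕ → R) (s : Finset ℕ) (n d : ℕ) :
    ((∑ k ∈ s, Polynomial.monomial k (c k)) ^ n).coeff d =
      ∑ t ∈ s.sym n with t.1.sum = d,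
        (t.1.countPerms : R) * (t.1.map c).prod := by
  simp only [sum_pow, Polynomial.finsetSum_coeff, sum_filter, monomial_multiset_prod,
    Polynomial.coeff_natCast_mul, Polynomial.coeff_monomial, mul_ite, mul_zero]

lemma sum_sym_Icc_eq_sum_partition {A : Type*} [AddCommMonoid A] (g : Multiset ℕ → A) (n d : ℕ) :
    ∑ t ∈ (Icc 1 d).sym n with t.1.sum = d, g t.1 =
      ∑ μ : Nat.Partition d with μ.parts.card = n, g μ.parts := by
  symm
  refine sum_bij (fun μ hμ => ⟨μ.parts, (mem_filter.1 hμ).2⟩) ?_ ?_ ?_ fun _ _ => rfl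
  · intro μ _
    refine mem_filter.2 ⟨mem_sym_iff.2 fun k hk => ?_, μ.parts_sum⟩
    exact mem_Icc.2 ⟨μ.parts_pos hk, μ.le_of_mem_parts hk⟩
  · intro μ _ ν _ h
    exact Nat.Partition.ext (congrArg Subtype.val h)
  · intro t ht
    obtain ⟨ht, hsum⟩ := mem_filter.1 ht
    exact ⟨⟨t, fun hk => (mem_Icc.1 (mem_sym_iff.1 ht _ hk)).1, hsum⟩,
      mem_filter.2 ⟨mem_univ _, t.2⟩, rfl⟩

lemma trunc_succ_eq_sum_Icc {P : PowerSeries R} (hP : P.constantCoeff = 0) (d : ℕ) :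
    P.trunc (d + 1) = ∑ k ∈ Icc 1 d, Polynomial.monomial k (P.coeff k) := by
  rw [PowerSeries.trunc_apply, Finset.sum_eq_sum_Ico_succ_bot d.succ_pos,
    PowerSeries.coeff_zero_eq_constantCoeff_apply, hP, map_zero, zero_add]
  rfl

lemma coeff_pow_eq_sum_partition {P : PowerSeries R} (hP : P.constantCoeff = 0) (n d : ℕ) :
    (P ^ n).coeff d = ∑ μ : Nat.Partition d with μ.parts.card = n,
      (μ.parts.countPerms : R) * (μ.parts.map fun k => P.coeff k).prod := by
  have htrunc : (P ^ n).coeff d = (P.trunc (d + 1) ^ n).coeff d := by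
    have h := congrArg (fun p => p.coeff d) (PowerSeries.trunc_trunc_pow P (d + 1) n)
    simpa only [← Polynomial.coe_pow, PowerSeries.coeff_trunc, Nat.lt_succ_self, if_true,
      Polynomial.coeff_coe] using h.symm
  rw [htrunc, trunc_succ_eq_sum_Icc hP, coeff_sum_monomial_pow,
    sum_sym_Icc_eq_sum_partition fun t => (t.countPerms : R) * (t.map fun k => P.coeff k).prod]

lemma coeff_eq_sum_range_coeff_pow {F P : PowerSeries R} (hP : P.constantCoeff = 0)
    (hF : F * (1 - P) = 1) (d : ℕ) :
    F.coeff d = ∑ n ∈ range (d + 1), (P ^ n).coeff d := by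
  have hgeom : F = ∑ n ∈ range (d + 1), P ^ n + F * P ^ (d + 1) := by
    linear_combination (∑ n ∈ range (d + 1), P ^ n) * hF - F * mul_neg_geom_sum P (d + 1)
  have htail : (F * P ^ (d + 1)).coeff d = 0 :=
    PowerSeries.X_pow_dvd_iff.1
      ((pow_dvd_pow_of_dvd (PowerSeries.X_dvd_iff.2 hP) _).mul_left F) d d.lt_succ_self
  conv_lhs => rw [hgeom]
  rw [map_add, htail, add_zero, map_sum]

lemma card_parts_le {d : ℕ} (μ : Nat.Partition d) : μ.parts.card ≤ d := by
  simpa [μ.parts_sum] using Multiset.card_nsmul_le_sum (a := 1) fun _ hk => μ.parts_pos hk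

lemma coeff_eq_sum_partition {F P : PowerSeries R} (hP : P.constantCoeff = 0)
    (hF : F * (1 - P) = 1) (d : ℕ) :
    F.coeff d = ∑ μ : Nat.Partition d,
      (μ.parts.countPerms : R) * (μ.parts.map fun k => P.coeff k).prod := by
  simp only [coeff_eq_sum_range_coeff_pow hP hF, coeff_pow_eq_sum_partition hP]
  exact sum_fiberwise_of_maps_to (fun μ _ => mem_range_succ_iff.2 (card_parts_le μ)) _

lemma uPart_eq_countPerms {d : ℕ} (μ : Nat.Partition d) : uPart μ = μ.parts.countPerms := by
  rw [uPart, Multiset.countPerms, Finsupp.multinomial_eq]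
  congr 1

lemma prod_map_neg_neg_one_pow_mul (b : ℕ → R) (t : Multiset ℕ) :
    (t.map fun k => -((-1) ^ k * b k)).prod = (-1) ^ (t.sum + t.card) * (t.map b).prod := by
  induction t using Multiset.induction_on with
  | empty => simp
  | cons k t ih =>
    simp only [Multiset.map_cons, Multiset.prod_cons, Multiset.sum_cons, Multiset.card_cons, ih]
    ring

lemma coeff_eq_sum_partition_of_mul_rescale_neg_one {F G : PowerSeries R}
    (hG : G.constantCoeff = 1) (hFG : F * PowerSeries.rescale (-1) G = 1) (d : ℕ) :
    F.coeff d = ∑ μ : Nat.Partition d, (-1) ^ (d + μ.parts.card) * (μ.parts.countPerms : R) *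
      (μ.parts.map fun k => G.coeff k).prod := by
  set P : PowerSeries R := 1 - PowerSeries.rescale (-1) G with hP
  have hP0 : P.constantCoeff = 0 := by
    rw [hP, map_sub, map_one, ← PowerSeries.coeff_zero_eq_constantCoeff_apply,
      PowerSeries.coeff_rescale, pow_zero, one_mul, PowerSeries.coeff_zero_eq_constantCoeff_apply,
      hG, sub_self]
  have hPk {k : ℕ} (hk : 0 < k) : P.coeff k = -((-1) ^ k * G.coeff k) := by
    rw [hP, map_sub, PowerSeries.coeff_one, if_neg hk.ne', zero_sub, PowerSeries.coeff_rescale]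
  rw [coeff_eq_sum_partition hP0 (by rwa [hP, sub_sub_cancel])]
  refine sum_congr rfl fun μ _ => ?_
  rw [Multiset.map_congr rfl fun k hk => hPk (μ.parts_pos hk), prod_map_neg_neg_one_pow_mul,
    μ.parts_sum]
  ring

lemma neg_one_zpow_natCast_sub {K : Type*} [DivisionRing K] (m n : ℕ) :
    (-1 : K) ^ ((m : ℤ) - n) = (-1) ^ (m + n) := by
  rw [zpow_natCast_sub_natCast₀ (neg_ne_zero.2 one_ne_zero), pow_add, div_eq_mul_inv, ← inv_pow,
    inv_neg_one]

lemma coeff_eq_mixRHS {F G : PowerSeries ℂ} (hG : G.constantCoeff = 1)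
    (hFG : F * PowerSeries.rescale (-1) G = 1) (d : ℕ) :
    F.coeff d = mixRHS d fun k => G.coeff k := by
  simp only [coeff_eq_sum_partition_of_mul_rescale_neg_one hG hFG, mixRHS, uPart_eq_countPerms,
    neg_one_zpow_natCast_sub]

end Partition

section ChainSum

/-- The `d`-tuples with entries in `S` that are pairwise `r`-related in increasing order of
position, indexing the multiple sums: strictly increasing for `<`, weakly for `≤`. -/
def chains {α : Type*} (r : α → α → Prop) [DecidableRel r] (S : Finset α) (d : ℕ) :
    Finset (Fin d → α) :=
  (Fintype.piFinset fun _ => S).filter fun m => ∀ i j, i < j → r (m i) (m j)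

/-- The sum of `∏ j, f (m j)` over the tuples `m ∈ chains r S d`, a truncated `•`-value when `r`
is `<` and a truncated `★`-value when `r` is `≤`. -/
def chainSum {α R : Type*} [CommSemiring R] (r : α → α → Prop) [DecidableRel r] (f : α → R)
    (S : Finset α) (d : ℕ) : R :=
  ∑ m ∈ chains r S d, ∏ j, f (m j)

/-- The generating function `∑ d, chainSum r f S d * X ^ d`. -/
def chainSeries {α R : Type*} [CommSemiring R] (r : α → α → Prop) [DecidableRel r] (f : α → R)
    (S : Finset α) : PowerSeries R :=
  PowerSeries.mk (chainSum r f S)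

lemma mem_chains_succ {α : Type*} {r : α → α → Prop} [DecidableRel r] {S : Finset α} {d : ℕ}
    {m : Fin (d + 1) → α} :
    m ∈ chains r S (d + 1) ↔
      m (Fin.last d) ∈ S ∧ Fin.init m ∈ chains r {x ∈ S | r x (m (Fin.last d))} d := by
  simp only [chains, mem_filter, Fintype.mem_piFinset, Fin.forall_fin_succ', Fin.init,
    Fin.castSucc_lt_castSucc_iff, Fin.castSucc_lt_last, (Fin.castSucc_lt_last _).not_gt,
    lt_irrefl, forall_const, false_imp_iff, implies_true, and_true, forall_and]
  tauto

section Recursion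

variable {α R : Type*} [CommSemiring R] (r : α → α → Prop) [DecidableRel r] (f : α → R)

lemma chainSum_zero (S : Finset α) : chainSum r f S 0 = 1 := by
  simp [chainSum, chains]

lemma chainSum_succ (S : Finset α) (d : ℕ) :
    chainSum r f S (d + 1) = ∑ a ∈ S, f a * chainSum r f {x ∈ S | r x a} d := by
  simp only [chainSum, mul_sum]
  rw [sum_sigma']
  refine sum_bij' (fun m _ => ⟨m (Fin.last d), Fin.init m⟩)
    (fun x _ => Fin.snoc (α := fun _ => α) x.2 x.1) ?_ ?_ ?_ ?_ ?_
  · exact fun m hm => mem_sigma.2 (mem_chains_succ.1 hm)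
  · rintro ⟨a, m⟩ ham
    simpa [mem_chains_succ] using ham
  · simp
  · simp
  · intro m _
    rw [Fin.prod_univ_castSucc, mul_comm]
    rfl

lemma constantCoeff_chainSeries (S : Finset α) :
    (chainSeries r f S).constantCoeff = 1 := by
  rw [chainSeries, ← PowerSeries.coeff_zero_eq_constantCoeff_apply, PowerSeries.coeff_mk,
    chainSum_zero]

lemma chainSeries_empty :
    chainSeries r f ∅ = 1 := by
  ext (_ | d) <;> simp [chainSeries, chainSum_zero, chainSum_succ, PowerSeries.coeff_one]

variable [DecidableEq α] {r} {a : α} {S : Finset α}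

lemma chainSum_insert_succ (haS : a ∉ S) (hra : ∀ x ∈ S, ¬ r a x) (d : ℕ) :
    chainSum r f (insert a S) (d + 1) =
      chainSum r f S (d + 1) + f a * chainSum r f {x ∈ insert a S | r x a} d := by
  rw [chainSum_succ, sum_insert haS, add_comm, chainSum_succ r f S]
  congr 1
  refine sum_congr rfl fun x hx => ?_
  rw [filter_insert, if_neg (hra x hx)]

end Recursion

section LinearOrder

variable {α R : Type*} [LinearOrder α] {a : α} {S : Finset α}

lemma chainSum_lt_insert_succ [CommSemiring R] (f : α → R) (ha : ∀ x ∈ S, x < a) (d : ℕ) :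
    chainSum (· < ·) f (insert a S) (d + 1) =
      chainSum (· < ·) f S (d + 1) + f a * chainSum (· < ·) f S d := by
  rw [chainSum_insert_succ f (fun h => (ha a h).false) fun x hx => (ha x hx).not_gt,
    filter_insert, if_neg (lt_irrefl a), filter_true_of_mem ha]

lemma chainSum_le_insert_succ [CommSemiring R] (f : α → R) (ha : ∀ x ∈ S, x < a) (d : ℕ) :
    chainSum (· ≤ ·) f (insert a S) (d + 1) =
      chainSum (· ≤ ·) f S (d + 1) + f a * chainSum (· ≤ ·) f (insert a S) d := by
  rw [chainSum_insert_succ f (fun h => (ha a h).false) fun x hx => (ha x hx).not_ge,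
    filter_true_of_mem (by simpa using fun x hx => (ha x hx).le)]

lemma chainSum_lt_eq_esymm [CommSemiring R] (f : α → R) (S : Finset α) (d : ℕ) :
    chainSum (· < ·) f S d = (S.val.map f).esymm d := by
  induction S using Finset.induction_on_max generalizing d with
  | empty =>
    cases d <;>
      simp [chainSum_zero, chainSum_succ, Multiset.esymm, Multiset.powersetCard_zero_right]
  | insert a S ha ih =>
    cases d with
    | zero => simp [chainSum_zero, Multiset.esymm]
    | succ d =>
      rw [chainSum_lt_insert_succ f ha, ih, ih, insert_val_of_notMem fun h => (ha a h).false]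
      simp [Multiset.esymm, Multiset.powersetCard_cons, Multiset.sum_map_mul_left]

variable [CommRing R]

lemma chainSeries_lt_insert (f : α → R) (ha : ∀ x ∈ S, x < a) :
    chainSeries (· < ·) f (insert a S) =
      (1 + PowerSeries.C (f a) * PowerSeries.X) * chainSeries (· < ·) f S := by
  ext (_ | d) <;>
    simp [chainSeries, chainSum_zero, chainSum_lt_insert_succ f ha, add_mul, mul_assoc,
      PowerSeries.coeff_succ_X_mul]

lemma chainSeries_le_insert (f : α → R) (ha : ∀ x ∈ S, x < a) :
    (1 - PowerSeries.C (f a) * PowerSeries.X) * chainSeries (· ≤ ·) f (insert a S) =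
      chainSeries (· ≤ ·) f S := by
  ext (_ | d) <;>
    simp [chainSeries, chainSum_zero, chainSum_le_insert_succ f ha, sub_mul, mul_assoc,
      PowerSeries.coeff_succ_X_mul]

lemma chainSeries_le_mul_rescale_chainSeries_lt (f : α → R) (S : Finset α) :
    chainSeries (· ≤ ·) f S * PowerSeries.rescale (-1) (chainSeries (· < ·) f S) = 1 := by
  induction S using Finset.induction_on_max with
  | empty => simp [chainSeries_empty]
  | insert a S ha ih =>
    have hlinear : PowerSeries.rescale (-1) (1 + PowerSeries.C (f a) * PowerSeries.X) =
        1 - PowerSeries.C (f a) * PowerSeries.X := by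
      have hC : PowerSeries.rescale (-1) (PowerSeries.C (f a)) = PowerSeries.C (f a) := by
        ext (_ | d) <;> simp [PowerSeries.coeff_C]
      simp [hC, PowerSeries.rescale_X, sub_eq_add_neg]
    rw [chainSeries_lt_insert f ha, map_mul, hlinear, mul_left_comm, ← mul_assoc,
      chainSeries_le_insert f ha, ih]

lemma chainSeries_lt_mul_rescale_chainSeries_le (f : α → R) (S : Finset α) :
    chainSeries (· < ·) f S * PowerSeries.rescale (-1) (chainSeries (· ≤ ·) f S) = 1 := by
  have h := congrArg (PowerSeries.rescale (-1)) (chainSeries_le_mul_rescale_chainSeries_lt f S)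
  simpa [PowerSeries.rescale_rescale, mul_comm] using h

theorem chainSum_lt_eq_mixRHS (f : α → ℂ) (S : Finset α) (d : ℕ) :
    chainSum (· < ·) f S d = mixRHS d (chainSum (· ≤ ·) f S) := by
  simpa only [chainSeries, PowerSeries.coeff_mk] using coeff_eq_mixRHS
    (constantCoeff_chainSeries _ f S) (chainSeries_lt_mul_rescale_chainSeries_le f S) d

theorem chainSum_le_eq_mixRHS (f : α → ℂ) (S : Finset α) (d : ℕ) :
    chainSum (· ≤ ·) f S d = mixRHS d (chainSum (· < ·) f S) := by
  simpa only [chainSeries, PowerSeries.coeff_mk] using coeff_eq_mixRHS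
    (constantCoeff_chainSeries _ f S) (chainSeries_le_mul_rescale_chainSeries_lt f S) d

end LinearOrder

end ChainSum

section Limits

lemma mul_esymm_map_eq_sum {α R : Type*} [CommRing R] (f : α → R) (S : Finset α) (k : ℕ) :
    k * (S.val.map f).esymm k =
      (-1) ^ (k + 1) * ∑ a ∈ antidiagonal k with a.1 < k,
        (-1) ^ a.1 * (S.val.map f).esymm a.1 * ∑ x ∈ S, f x ^ a.2 := by
  have hval : ((univ : Finset S).val.map fun x : S => f x) = S.val.map f :=
    Multiset.attach_map_val' S.val f
  have hpsum (j : ℕ) : ∑ x : S, f x ^ j = ∑ x ∈ S, f x ^ j := sum_coe_sort S fun x => f x ^ j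
  have h := congrArg (MvPolynomial.aeval fun x : S => f x) (MvPolynomial.mul_esymm_eq_sum S R k)
  simpa only [map_mul, map_pow, map_neg, map_one, map_natCast, map_sum, MvPolynomial.psum,
    MvPolynomial.aeval_X, MvPolynomial.aeval_esymm_eq_multiset_esymm, hval,
    hpsum] using h

lemma exists_tendsto_esymm {α K ι : Type*} [Field K] [CharZero K] [TopologicalSpace K]
    [IsTopologicalRing K] {l : Filter ι} (f : α → K) (S : ι → Finset α)
    (hf : ∀ k ≠ 0, ∃ p, Tendsto (fun i => ∑ x ∈ S i, f x ^ k) l (𝓝 p)) (d : ℕ) :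
    ∃ e, Tendsto (fun i => ((S i).val.map f).esymm d) l (𝓝 e) := by
  induction d using Nat.strong_induction_on with
  | _ d ih =>
  rcases eq_or_ne d 0 with rfl | hd
  · exact ⟨1, by simp [Multiset.esymm, tendsto_const_nhds]⟩
  choose! p hp using hf
  choose! e he using ih
  have hnewton (i : ι) : ((S i).val.map f).esymm d =
      (d : K)⁻¹ * ((-1) ^ (d + 1) * ∑ a ∈ antidiagonal d with a.1 < d,
        (-1) ^ a.1 * ((S i).val.map f).esymm a.1 * ∑ x ∈ S i, f x ^ a.2) := by
    rw [← mul_esymm_map_eq_sum, inv_mul_cancel_left₀ (Nat.cast_ne_zero.2 hd)]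
  have hterm : ∀ a ∈ {a ∈ antidiagonal d | a.1 < d}, Tendsto
      (fun i => (-1) ^ a.1 * ((S i).val.map f).esymm a.1 * ∑ x ∈ S i, f x ^ a.2) l
      (𝓝 ((-1) ^ a.1 * e a.1 * p a.2)) := by
    intro a ha
    obtain ⟨had, hlt⟩ := mem_filter.1 ha
    have ha2 : a.2 ≠ 0 := by have := mem_antidiagonal.1 had; lia
    exact ((he a.1 hlt).const_mul _).mul (hp a.2 ha2)
  simp only [hnewton]
  exact ⟨_, ((tendsto_finsetSum _ hterm).const_mul _).const_mul _⟩

lemma tendsto_mixRHS {ι : Type*} {l : Filter ι} {v : ι → ℕ → ℂ} {V : ℕ → ℂ} {d : ℕ}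
    (h : ∀ c, Tendsto (fun i => v i c) l (𝓝 (V c))) :
    Tendsto (fun i => mixRHS d (v i)) l (𝓝 (mixRHS d V)) :=
  tendsto_finsetSum _ fun μ _ => (tendsto_multiset_prod μ.parts fun c _ => h c).const_mul _

theorem exists_tendsto_chainSum_and_eq_mixRHS {α ι : Type*} [LinearOrder α] {l : Filter ι}
    [l.NeBot] {f : α → ℂ} {S : ι → Finset α}
    (hf : ∀ k ≠ 0, ∃ p, Tendsto (fun i => ∑ x ∈ S i, f x ^ k) l (𝓝 p)) :
    ∃ E H : ℕ → ℂ,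
      (∀ d, Tendsto (fun i => chainSum (· < ·) f (S i) d) l (𝓝 (E d))) ∧
      (∀ d, Tendsto (fun i => chainSum (· ≤ ·) f (S i) d) l (𝓝 (H d))) ∧
      (∀ d, E d = mixRHS d H) ∧ ∀ d, H d = mixRHS d E := by
  obtain ⟨E, hE⟩ : ∃ E : ℕ → ℂ, ∀ d,
      Tendsto (fun i => chainSum (· < ·) f (S i) d) l (𝓝 (E d)) := by
    simp only [chainSum_lt_eq_esymm]
    exact Classical.skolem.1 (exists_tendsto_esymm f S hf)
  have hH (d : ℕ) : Tendsto (fun i => chainSum (· ≤ ·) f (S i) d) l (𝓝 (mixRHS d E)) := by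
    simpa only [chainSum_le_eq_mixRHS] using tendsto_mixRHS hE
  have hE' (d : ℕ) : Tendsto (fun i => chainSum (· < ·) f (S i) d) l
      (𝓝 (mixRHS d fun c => mixRHS c E)) := by
    simpa only [chainSum_lt_eq_mixRHS f _ d] using tendsto_mixRHS hH
  exact ⟨E, fun d => mixRHS d E, hE, hH, fun d => tendsto_nhds_unique (hE d) (hE' d),
    fun _ => rfl⟩

end Limits

section DirichletSeries

lemma sum_Icc_one_eq_sum_range {E : Type*} [AddCommMonoid E] (g : ℕ → E) (M : ℕ) :
    ∑ m ∈ Icc 1 M, g m = ∑ i ∈ range M, g (i + 1) := by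
  rw [range_eq_Ico, sum_Ico_add' g 0 M 1]
  rfl

lemma exists_tendsto_sum_Icc_of_norm_le {E : Type*} [NormedAddCommGroup E] [CompleteSpace E]
    {g : ℕ → E} {b : ℕ → ℝ} (hb : Summable b) (hgb : ∀ m ≠ 0, ‖g m‖ ≤ b m) :
    ∃ p, Tendsto (fun M => ∑ m ∈ Icc 1 M, g m) atTop (𝓝 p) := by
  have hsum : Summable fun n => g (n + 1) :=
    ((summable_nat_add_iff 1).2 hb).of_norm_bounded fun n => hgb _ n.succ_ne_zero
  simp only [sum_Icc_one_eq_sum_range]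
  exact ⟨_, hsum.hasSum.tendsto_sum_nat⟩

variable {N : ℕ} [NeZero N]

lemma sum_range_natCast_zmod {E : Type*} [AddCommMonoid E] (f : ZMod N → E) :
    ∑ i ∈ range N, f i = ∑ x, f x :=
  sum_bij' (fun i _ => (i : ZMod N)) (fun x _ => x.val) (fun _ _ => mem_univ _)
    (fun x _ => mem_range.2 x.val_lt) (fun _ hi => ZMod.val_cast_of_lt (mem_range.1 hi))
    (fun x _ => x.natCast_zmod_val) fun _ _ => rfl

lemma norm_sum_range_le_of_sum_eq_zero {E : Type*} [SeminormedAddCommGroup E] {f : ZMod N → E}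
    (hf : ∑ x, f x = 0) {B : ℝ} (hB : ∀ x, ‖f x‖ ≤ B) (n : ℕ) :
    ‖∑ i ∈ range n, f i‖ ≤ N * B := by
  induction n using Nat.strong_induction_on with
  | _ n ih =>
    rcases lt_or_ge n N with hn | hn
    · have hB0 : 0 ≤ B := (norm_nonneg _).trans (hB 0)
      calc ‖∑ i ∈ range n, f i‖ ≤ n * B := by
            simpa using norm_sum_le_of_le (range n) fun i _ => hB i
        _ ≤ N * B := by gcongr
    · obtain ⟨m, rfl⟩ := Nat.exists_eq_add_of_le hn
      have hperiod : ∑ i ∈ range (N + m), f i = ∑ i ∈ range m, f i := by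
        simp [sum_range_add, sum_range_natCast_zmod, hf]
      rw [hperiod]
      exact ih m (Nat.lt_add_of_pos_left (NeZero.pos N))

lemma norm_sum_range_dirichletCharacter_le {χ : DirichletCharacter ℂ N} (hχ : χ ≠ 1) (n : ℕ) :
    ‖∑ i ∈ range n, χ ((i + 1 : ℕ) : ZMod N)‖ ≤ N := by
  have hsum : ∑ x, χ (x + 1) = 0 :=
    (Equiv.sum_comp (Equiv.addRight 1) χ).trans (MulChar.sum_eq_zero_of_ne_one hχ)
  simpa using norm_sum_range_le_of_sum_eq_zero hsum (fun _ => χ.norm_le_one _) n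

/-- The term `χ(m) / m ^ s` of the Dirichlet `L`-series of `χ`. -/
def lTerm {N : ℕ} (χ : DirichletCharacter ℂ N) (s m : ℕ) : ℂ :=
  χ m / (m : ℂ) ^ s

lemma exists_tendsto_sum_lTerm_one {χ : DirichletCharacter ℂ N} (hχ : χ ≠ 1) :
    ∃ p, Tendsto (fun M => ∑ m ∈ Icc 1 M, lTerm χ 1 m) atTop (𝓝 p) := by
  have hanti : Antitone fun n : ℕ => 1 / ((n : ℝ) + 1) := fun _ _ => Nat.one_div_le_one_div
  have hcauchy := hanti.cauchySeq_series_mul_of_tendsto_zero_of_bounded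
    tendsto_one_div_add_atTop_nhds_zero_nat (norm_sum_range_dirichletCharacter_le hχ)
  simpa [sum_Icc_one_eq_sum_range, lTerm, div_eq_inv_mul] using
    cauchySeq_tendsto_of_complete hcauchy

lemma exists_tendsto_sum_lTerm_pow {χ : DirichletCharacter ℂ N} {s k : ℕ} (hs : s ≠ 0)
    (hk : k ≠ 0) (hχ : s = 1 → χ ≠ 1) :
    ∃ p, Tendsto (fun M => ∑ m ∈ Icc 1 M, lTerm χ s m ^ k) atTop (𝓝 p) := by
  rcases eq_or_ne (s * k) 1 with hsk | hsk
  · obtain ⟨rfl, rfl⟩ := mul_eq_one.1 hsk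
    simpa only [pow_one] using exists_tendsto_sum_lTerm_one (hχ rfl)
  · have hsk' : 1 < s * k := by have := mul_ne_zero hs hk; lia
    refine exists_tendsto_sum_Icc_of_norm_le (Real.summable_one_div_nat_pow.2 hsk') fun m _ => ?_
    calc ‖lTerm χ s m ^ k‖ = ‖χ m‖ ^ k / (m : ℝ) ^ (s * k) := by
          simp [lTerm, div_pow, pow_mul]
      _ ≤ 1 / (m : ℝ) ^ (s * k) := by
          gcongr
          exact pow_le_one₀ (norm_nonneg _) (χ.norm_le_one _)

end DirichletSeries

section QSeries

/-- The term `χ(m) q ^ (m (z - 1)) / [m]_q ^ z` of the `q`-analogue of the Dirichlet `L`-series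
of `χ`. -/
def qLTerm {N : ℕ} (χ : DirichletCharacter ℂ N) (q : ℝ) (z : ℂ) (m : ℕ) : ℂ :=
  χ m * (q : ℂ) ^ ((m : ℂ) * (z - 1)) / (((1 - q ^ m) / (1 - q) : ℝ) : ℂ) ^ z

variable {N : ℕ} (χ : DirichletCharacter ℂ N) {q : ℝ} {z : ℂ}

lemma one_le_one_sub_pow_div_one_sub {m : ℕ} (hq : 0 ≤ q) (hq1 : q < 1) (hm : m ≠ 0) :
    1 ≤ (1 - q ^ m) / (1 - q) := by
  rw [one_le_div (sub_pos.2 hq1)]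
  exact sub_le_sub_left (pow_le_of_le_one hq hq1.le hm) 1

lemma norm_qLTerm_le (hq : 0 < q) (hq1 : q < 1) (hz : 0 ≤ z.re) {m : ℕ} (hm : m ≠ 0) :
    ‖qLTerm χ q z m‖ ≤ (q ^ (z.re - 1)) ^ m := by
  have hqm := one_le_one_sub_pow_div_one_sub hq.le hq1 hm
  have hexp : ((m : ℂ) * (z - 1)).re = (z.re - 1) * m := by simp [mul_comm]
  have hnum : ‖(q : ℂ) ^ ((m : ℂ) * (z - 1))‖ = (q ^ (z.re - 1)) ^ m := by
    rw [norm_cpow_eq_rpow_re_of_pos hq, hexp, Real.rpow_mul hq.le, Real.rpow_natCast]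
  rw [qLTerm, norm_div, norm_mul, hnum, norm_cpow_eq_rpow_re_of_pos (one_pos.trans_le hqm)]
  calc ‖χ m‖ * (q ^ (z.re - 1)) ^ m / ((1 - q ^ m) / (1 - q)) ^ z.re
      ≤ 1 * (q ^ (z.re - 1)) ^ m / 1 := by
        gcongr
        · exact χ.norm_le_one _
        · exact Real.one_le_rpow hqm hz
    _ = (q ^ (z.re - 1)) ^ m := by rw [one_mul, div_one]

lemma exists_tendsto_sum_qLTerm_pow (hq : 0 < q) (hq1 : q < 1) (hz : 1 < z.re) {k : ℕ}
    (hk : k ≠ 0) :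
    ∃ p, Tendsto (fun M => ∑ m ∈ Icc 1 M, qLTerm χ q z m ^ k) atTop (𝓝 p) := by
  set r : ℝ := q ^ (z.re - 1)
  have hr0 : 0 ≤ r := Real.rpow_nonneg hq.le _
  have hr1 : r < 1 := Real.rpow_lt_one hq.le hq1 (sub_pos.2 hz)
  refine exists_tendsto_sum_Icc_of_norm_le
    (summable_geometric_of_lt_one (pow_nonneg hr0 k) (pow_lt_one₀ hr0 hr1 hk)) fun m hm => ?_
  rw [norm_pow, pow_right_comm]
  gcongr
  exact norm_qLTerm_le χ hq hq1 (zero_le_one.trans hz.le) hm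

end QSeries

/-- **Formula (2.13)**: for `(P,Q)` any of `(L^•,L^★)`, `(L^★,L^•)`,
`(L^•_q,L^★_q)`, `(L^★_q,L^•_q)`, one has
`P_d({s}^d;{χ}^d) = Σ_{μ ⊢ d} ε_μ u_μ ∏_{j=1}^{ℓ(μ)} Q_{μ_j}({s}^{μ_j};{χ}^{μ_j})`.
Each multiple `L`-value is expressed as the limit of its truncations, the `Q`-values of
all depths `1 ≤ c ≤ d` being packaged as a function `V` of the depth. -/
theorem multiple_L_value_bullet_star_relation
    (N : ℕ) [NeZero N] (χ : DirichletCharacter ℂ N) (d : ℕ) (hd : 1 ≤ d)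
    (s : ℕ) (hs : 1 ≤ s) (hχ : s = 1 → χ ≠ 1) :
    ((∃ V : ℕ → ℂ,
        (∀ c, 1 ≤ c → c ≤ d → Tendsto (multLSumLe χ c s) atTop (𝓝 (V c))) ∧
        Tendsto (multLSumLt χ d s) atTop (𝓝 (mixRHS d V))) ∧
      (∃ V : ℕ → ℂ,
        (∀ c, 1 ≤ c → c ≤ d → Tendsto (multLSumLt χ c s) atTop (𝓝 (V c))) ∧
        Tendsto (multLSumLe χ d s) atTop (𝓝 (mixRHS d V)))) ∧
    (∀ q : ℝ, 0 < q → q < 1 → ∀ z : ℂ, 1 < z.re →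
      (∃ V : ℕ → ℂ,
        (∀ c, 1 ≤ c → c ≤ d → Tendsto (qMultLSumLe χ c q z) atTop (𝓝 (V c))) ∧
        Tendsto (qMultLSumLt χ d q z) atTop (𝓝 (mixRHS d V))) ∧
      (∃ V : ℕ → ℂ,
        (∀ c, 1 ≤ c → c ≤ d → Tendsto (qMultLSumLt χ c q z) atTop (𝓝 (V c))) ∧
        Tendsto (qMultLSumLe χ d q z) atTop (𝓝 (mixRHS d V)))) := by
  constructor
  · obtain ⟨E, H, hE, hH, hEH, hHE⟩ := exists_tendsto_chainSum_and_eq_mixRHS (S := Icc 1)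
      fun _ hk => exists_tendsto_sum_lTerm_pow (Nat.one_le_iff_ne_zero.1 hs) hk hχ
    exact ⟨⟨H, fun c _ _ => hH c, hEH d ▸ hE d⟩, E, fun c _ _ => hE c, hHE d ▸ hH d⟩
  · intro q hq hq1 z hz
    obtain ⟨E, H, hE, hH, hEH, hHE⟩ := exists_tendsto_chainSum_and_eq_mixRHS (S := Icc 1)
      fun _ hk => exists_tendsto_sum_qLTerm_pow χ hq hq1 hz hk
    exact ⟨⟨H, fun c _ _ => hH c, hEH d ▸ hE d⟩, E, fun c _ _ => hE c, hHE d ▸ hH d⟩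

end
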